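/- Let N ≥ 1 be an integer, τ ∈ ℂ with Im τ > 0, and ξ, ζ ∈ ℂ generic (so that no denominator below vanishes). For integers a, b let S^{ab}(ξ,ζ,τ) = ( ϑ[(b−a)/N + 1/2, 1/2](ξ+ζ, Nτ) / ϑ[−a/N + 1/2, 1/2](ζ, Nτ) ) · ( ∏_{k=0, k≠b mod N}^{N−1} ϑ[k/N + 1/2, 1/2](ξ, Nτ) ) / ( ∏_{k=1}^{N−1} ϑ[k/N + 1/2, 1/2](0, Nτ) ), where a, b are read modulo N. Then for all i, j ∈ {0,…,N−1} the following unitarity identity holds: ∑_{k=0}^{N−1} S^{−i−k, i−k}(ξ, ζ, τ) · S^{−j−k, k−j}(−ξ, ζ, τ) = ( ϑ[1/2,1/2](ξ+ζ, τ) · ϑ[1/2,1/2](−ξ+ζ, τ) / ϑ[1/2,1/2](ζ, τ)² ) · δ_{ij}, where δ_{ij} is the Kronecker delta. -/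

import Mathlib

open Complex

/-- The Jacobi theta function with characteristics `(g1, g2)`:
`ϑ[g1,g2](ξ,τ) = ∑_{m∈ℤ} exp(iπ(m+g1)²τ + 2iπ(m+g1)(ξ+g2))`. -/
noncomputable def thetaChar (g1 g2 : ℝ) (xi tau : ℂ) : ℂ :=
  ∑' m : ℤ, Complex.exp ((Real.pi : ℂ) * I * ((m : ℂ) + (g1 : ℂ)) ^ 2 * tau
      + 2 * (Real.pi : ℂ) * I * ((m : ℂ) + (g1 : ℂ)) * (xi + (g2 : ℂ)))

/-- The nonvanishing entries `S^{ab}(ξ,ζ,τ)` of the ℤ_N-symmetric elliptic R-matrix,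
with indices `a, b` read modulo `N`:
`S^{ab} = (ϑ[(b−a)/N+1/2,1/2](ξ+ζ,Nτ)/ϑ[−a/N+1/2,1/2](ζ,Nτ))
  (∏_{k=0,k≠b mod N}^{N−1} ϑ[k/N+1/2,1/2](ξ,Nτ)) / (∏_{k=1}^{N−1} ϑ[k/N+1/2,1/2](0,Nτ))`. -/
noncomputable def Smat (N : ℕ) (xi zeta tau : ℂ) (a b : ℤ) : ℂ :=
  thetaChar (((b : ℝ) - (a : ℝ)) / N + 1 / 2) (1 / 2) (xi + zeta) ((N : ℂ) * tau)
    / thetaChar (-(a : ℝ) / N + 1 / 2) (1 / 2) zeta ((N : ℂ) * tau)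
    * (∏ k ∈ (Finset.range N).filter (fun k : ℕ => (k : ℤ) % (N : ℤ) ≠ b % (N : ℤ)),
        thetaChar ((k : ℝ) / N + 1 / 2) (1 / 2) xi ((N : ℂ) * tau))
    / ∏ k ∈ Finset.Icc 1 (N - 1),
        thetaChar ((k : ℝ) / N + 1 / 2) (1 / 2) 0 ((N : ℂ) * tau)

/-!
The functions `f_k = ϑ[k/N+1/2,1/2](·, Nτ)` are, up to exponential factors, the shifts by `kτ` of
the odd theta function `ϑ` of parameter `Nτ`. Weierstrass' three-term relation for `ϑ`, once
differentiated, writes the `k`-th summand, up to a factor free of `k`, as a combination of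
logarithmic derivatives of `f_{k±i}` and `f_{k±j}`. For `i ≠ j` each of them is summed over a full
period, and the sum telescopes to `0`. For `i = j` a second differentiation gives second logarithmic
derivatives, whose sum over a period is the second logarithmic derivative of `∏ f_k`. This product
is a multiple of the odd theta function of parameter `τ`, because functions with its
quasi-periodicity form a line, and the differentiated relation for parameter `τ` finishes the
computation. Values of `ξ` at which some denominator of this argument vanishes are reached by
continuity.
-/

open scoped Real Topology

section Entire

variable {f g : ℂ → ℂ}

theorem eq_of_eventuallyEq_of_entire (hf : Differentiable ℂ f) (hg : Differentiable ℂ g) {x : ℂ}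
    (h : f =ᶠ[𝓝 x] g) : f = g :=
  AnalyticOnNhd.eq_of_eventuallyEq (fun y _ => hf.analyticAt y) (fun y _ => hg.analyticAt y) h

theorem eventually_nhdsNE_ne_zero_of_entire (hf : Differentiable ℂ f) {y : ℂ} (hy : f y ≠ 0)
    (x : ℂ) : ∀ᶠ u in 𝓝[≠] x, f u ≠ 0 :=
  (hf.analyticAt x).eventually_eq_zero_or_eventually_ne_zero.resolve_left fun h =>
    hy (congrFun (eq_of_eventuallyEq_of_entire hf (differentiable_const 0) h) y)

theorem differentiableAt_logDeriv_of_entire (hf : Differentiable ℂ f) {x : ℂ} (hx : f x ≠ 0) :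
    DifferentiableAt ℂ (logDeriv f) x :=
  (hf.deriv x).div (hf x) hx

theorem exists_eq_const_mul_of_wronskian_eq_zero (hf : Differentiable ℂ f)
    (hg : Differentiable ℂ g) (hW : ∀ x, deriv f x * g x = f x * deriv g x) {y : ℂ}
    (hy : g y ≠ 0) : ∃ c : ℂ, ∀ x, f x = c * g x := by
  obtain ⟨r, hr, hball⟩ :=
    Metric.eventually_nhds_iff_ball.1 (hg.continuous.continuousAt.eventually_ne hy)
  have hquot : ∀ x ∈ Metric.ball y r, HasDerivAt (fun u => f u / g u) 0 x := fun x hx => by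
    simpa [hW] using (hf x).hasDerivAt.fun_div (hg x).hasDerivAt (hball x hx)
  obtain ⟨c, hc⟩ := Metric.isOpen_ball.exists_is_const_of_deriv_eq_zero
    (convex_ball y r).isPreconnected
    (fun x hx => (hquot x hx).differentiableAt.differentiableWithinAt)
    fun x hx => (hquot x hx).deriv
  refine ⟨c, congrFun (eq_of_eventuallyEq_of_entire hf (hg.const_mul c) (x := y) ?_)⟩
  filter_upwards [Metric.ball_mem_nhds y hr] with x hx
  rw [← hc x hx, div_mul_cancel₀ _ (hball x hx)]

theorem intervalIntegral_add_of_entire_periodic (hf : Differentiable ℂ f)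
    (hper : Function.Periodic f 1) (w : ℂ) :
    ∫ x in (0 : ℝ)..1, f (x + w) = ∫ x in (0 : ℝ)..1, f x := by
  obtain ⟨F, hF⟩ := hf.isExactOn_univ
  replace hF : ∀ z, HasDerivAt F (f z) z := fun z => hF z (Set.mem_univ z)
  have hint (w : ℂ) : ∫ x in (0 : ℝ)..1, f (x + w) = F (w + 1) - F w := by
    have hcont : Continuous fun x : ℝ => f (x + w) := by
      have := hf.continuous
      fun_prop
    rw [intervalIntegral.integral_eq_sub_of_hasDerivAt
      (fun x _ => ((hF (x + w)).comp_add_const (x : ℂ) w).comp_ofReal)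
      (hcont.intervalIntegrable 0 1)]
    simp [add_comm]
  have hconst (z : ℂ) : HasDerivAt (fun w => F (w + 1) - F w) 0 z := by
    simpa [hper z] using ((hF (z + 1)).comp_add_const z 1).fun_sub (hF z)
  calc ∫ x in (0 : ℝ)..1, f (x + w) = F (w + 1) - F w := hint w
    _ = F (0 + 1) - F 0 := is_const_of_deriv_eq_zero (fun z => (hconst z).differentiableAt)
        (fun z => (hconst z).deriv) w 0
    _ = ∫ x in (0 : ℝ)..1, f x := by simpa using (hint 0).symm

theorem eq_zero_of_eq_zero_on_real (hf : Differentiable ℂ f) (h : ∀ x : ℝ, f x = 0) : f = 0 := by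
  have hreal : Filter.Tendsto ((↑) : ℝ → ℂ) (𝓝[≠] 0) (𝓝[≠] 0) :=
    tendsto_nhdsWithin_of_tendsto_nhds_of_eventually_within _
      (by simpa using (continuous_ofReal.tendsto 0).mono_left nhdsWithin_le_nhds)
      (by filter_upwards [self_mem_nhdsWithin] with x hx; simpa using hx)
  exact AnalyticOnNhd.eq_of_frequently_eq (fun x _ => hf.analyticAt x)
    (fun x _ => analyticAt_const) (hreal.frequently (.of_forall h))

theorem eq_zero_of_fourier_integrals_eq_zero (hf : Differentiable ℂ f)
    (hper : Function.Periodic f 1)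
    (h : ∀ n : ℤ, ∫ x in (0 : ℝ)..1, cexp (-2 * π * I * n * x) * f x = 0) : f = 0 := by
  have : Fact ((0 : ℝ) < 1) := ⟨one_pos⟩
  have hper' : Function.Periodic (fun x : ℝ => f x) 1 := fun x => by simpa using hper x
  let g : C(AddCircle (1 : ℝ), ℂ) :=
    ⟨hper'.lift, continuous_coinduced_dom.mpr (hf.continuous.comp continuous_ofReal)⟩
  have hcoeff : fourierCoeff g = 0 := by
    ext n
    rw [fourierCoeff_eq_intervalIntegral g n 0, zero_add, div_one, one_smul, Pi.zero_apply, ← h n]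
    refine intervalIntegral.integral_congr fun x _ => ?_
    rw [fourier_coe_apply, smul_eq_mul]
    change _ * f x = _
    push_cast
    ring_nf
  refine eq_zero_of_eq_zero_on_real hf fun x => ?_
  have hsum := has_pointwise_sum_fourier_series_of_summable (f := g)
    (hcoeff ▸ summable_zero) (x : AddCircle (1 : ℝ))
  simp only [hcoeff, Pi.zero_apply, zero_smul] at hsum
  exact hsum.unique hasSum_zero

end Entire

section ThetaChar

variable {t : ℂ}

theorem thetaChar_eq_exp_mul_jacobiTheta₂ (g1 g2 : ℝ) (x t : ℂ) : thetaChar g1 g2 x t =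
    cexp (π * I * g1 ^ 2 * t + 2 * π * I * g1 * (x + g2)) * jacobiTheta₂ (x + g2 + g1 * t) t := by
  rw [thetaChar, jacobiTheta₂, ← tsum_mul_left]
  refine tsum_congr fun m => ?_
  rw [jacobiTheta₂_term, ← Complex.exp_add]
  ring_nf

theorem hasSum_thetaChar (g1 g2 : ℝ) (x : ℂ) (ht : 0 < t.im) :
    HasSum (fun m : ℤ => cexp (π * I * (m + g1) ^ 2 * t + 2 * π * I * (m + g1) * (x + g2)))
      (thetaChar g1 g2 x t) := by
  rw [thetaChar_eq_exp_mul_jacobiTheta₂]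
  refine ((hasSum_jacobiTheta₂_term _ ht).mul_left _).congr_fun fun m => ?_
  rw [jacobiTheta₂_term, ← Complex.exp_add]
  ring_nf

theorem differentiable_thetaChar (g1 g2 : ℝ) (ht : 0 < t.im) :
    Differentiable ℂ fun x => thetaChar g1 g2 x t := by
  simp only [thetaChar_eq_exp_mul_jacobiTheta₂]
  exact fun x => DifferentiableAt.mul (by fun_prop) <|
    (differentiableAt_jacobiTheta₂_fst (x + g2 + g1 * t) ht).comp x
      (f := fun x => x + (g2 : ℂ) + g1 * t) (by fun_prop)

theorem thetaChar_add_intCast_left (g1 g2 : ℝ) (x t : ℂ) (n : ℤ) :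
    thetaChar (g1 + n) g2 x t = thetaChar g1 g2 x t := by
  rw [thetaChar, thetaChar, eq_comm, ← (Equiv.addRight n).tsum_eq]
  refine tsum_congr fun m => ?_
  simp only [Equiv.coe_addRight]
  push_cast
  ring_nf

theorem thetaChar_add_one (g1 g2 : ℝ) (x t : ℂ) :
    thetaChar g1 g2 (x + 1) t = cexp (2 * π * I * g1) * thetaChar g1 g2 x t := by
  rw [thetaChar_eq_exp_mul_jacobiTheta₂, thetaChar_eq_exp_mul_jacobiTheta₂,
    show x + 1 + g2 + g1 * t = x + g2 + g1 * t + 1 by ring, jacobiTheta₂_add_left, ← mul_assoc,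
    ← Complex.exp_add]
  ring_nf

theorem thetaChar_add_one_right (g1 g2 : ℝ) (x t : ℂ) :
    thetaChar g1 (g2 + 1) x t = cexp (2 * π * I * g1) * thetaChar g1 g2 x t := by
  rw [← thetaChar_add_one, thetaChar, thetaChar]
  refine tsum_congr fun m => ?_
  push_cast
  ring_nf

theorem thetaChar_add_ofReal_mul (g1 g2 a : ℝ) (x t : ℂ) : thetaChar g1 g2 (x + a * t) t =
    cexp (-(π * I * a ^ 2 * t) - 2 * π * I * a * (x + g2)) * thetaChar (g1 + a) g2 x t := by
  rw [thetaChar_eq_exp_mul_jacobiTheta₂, thetaChar_eq_exp_mul_jacobiTheta₂, ← mul_assoc,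
    ← Complex.exp_add]
  push_cast
  ring_nf

theorem thetaChar_neg (g1 g2 : ℝ) (x t : ℂ) :
    thetaChar (-g1) (-g2) (-x) t = thetaChar g1 g2 x t := by
  rw [thetaChar_eq_exp_mul_jacobiTheta₂, thetaChar_eq_exp_mul_jacobiTheta₂,
    ← jacobiTheta₂_neg_left]
  push_cast
  ring_nf

/-- The splitting of `ℤ × ℤ` by the parity `ε` of `m + n`, through the coordinates `(p, q)` with
`(m, n) = (p + q + ε, p - q)`. -/
def intParityEquiv : (ℤ × ℤ) ⊕ (ℤ × ℤ) ≃ ℤ × ℤ where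
  toFun := Sum.elim (fun p => (p.1 + p.2, p.1 - p.2)) (fun p => (p.1 + p.2 + 1, p.1 - p.2))
  invFun p := if (p.1 + p.2) % 2 = 0 then .inl ((p.1 + p.2) / 2, (p.1 - p.2) / 2)
    else .inr ((p.1 + p.2 - 1) / 2, (p.1 - p.2 - 1) / 2)
  left_inv := by rintro (⟨p, q⟩ | ⟨p, q⟩) <;> grind
  right_inv := by rintro ⟨m, n⟩; grind

theorem thetaChar_mul_thetaChar (g1 g2 h1 h2 : ℝ) (u v : ℂ) (ht : 0 < t.im) :
    thetaChar g1 g2 u t * thetaChar h1 h2 v t =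
      thetaChar ((g1 + h1) / 2) (g2 + h2) (u + v) (2 * t) *
          thetaChar ((g1 - h1) / 2) (g2 - h2) (u - v) (2 * t) +
        thetaChar ((g1 + h1 + 1) / 2) (g2 + h2) (u + v) (2 * t) *
          thetaChar ((g1 - h1 + 1) / 2) (g2 - h2) (u - v) (2 * t) := by
  have ht2 : 0 < (2 * t).im := by simpa using ht
  have hasSum_mul {f g : ℤ → ℂ} {a b : ℂ} (hf : HasSum f a) (hg : HasSum g b) :
      HasSum (fun p : ℤ × ℤ => f p.1 * g p.2) (a * b) :=
    hf.mul hg (summable_mul_of_summable_norm hf.summable.norm hg.summable.norm)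
  refine (hasSum_mul (hasSum_thetaChar g1 g2 u ht) (hasSum_thetaChar h1 h2 v ht)).unique ?_
  rw [← intParityEquiv.hasSum_iff]
  refine HasSum.sum
    ((hasSum_mul (hasSum_thetaChar _ _ _ ht2) (hasSum_thetaChar _ _ _ ht2)).congr_fun ?_)
    ((hasSum_mul (hasSum_thetaChar _ _ _ ht2) (hasSum_thetaChar _ _ _ ht2)).congr_fun ?_) <;>
  · rintro ⟨p, q⟩
    simp only [Function.comp, intParityEquiv, Equiv.coe_fn_mk, Sum.elim_inl, Sum.elim_inr,
      ← Complex.exp_add]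
    push_cast
    ring_nf

end ThetaChar

section ThetaUniqueness

variable {t : ℂ}

theorem intervalIntegral_jacobiTheta₂ (ht : 0 < t.im) :
    ∫ x in (0 : ℝ)..1, jacobiTheta₂ x t = 1 := by
  have hterm (n : ℤ) : ∫ x in (0 : ℝ)..1, jacobiTheta₂_term n x t = if n = 0 then 1 else 0 := by
    split_ifs with hn
    · simp [jacobiTheta₂_term, hn]
    · have hc : 2 * π * I * n ≠ 0 := mul_ne_zero two_pi_I_ne_zero (Int.cast_ne_zero.2 hn)
      simp only [jacobiTheta₂_term, Complex.exp_add]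
      rw [intervalIntegral.integral_mul_const, integral_exp_mul_complex hc]
      simp [mul_comm _ (n : ℂ), Complex.exp_int_mul_two_pi_mul_I]
  let term (n : ℤ) : C(ℝ, ℂ) :=
    ⟨fun x => jacobiTheta₂_term n x t, by unfold jacobiTheta₂_term; fun_prop⟩
  have hnorm (n : ℤ) : ‖(term n).restrict
      (⟨Set.uIcc (0 : ℝ) 1, isCompact_uIcc⟩ : TopologicalSpace.Compacts ℝ)‖
        ≤ ‖jacobiTheta₂_term n 0 t‖ :=
    (ContinuousMap.norm_le _ (norm_nonneg _)).2 fun x => by simp [term, norm_jacobiTheta₂_term]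
  calc ∫ x in (0 : ℝ)..1, jacobiTheta₂ x t
      = ∑' n : ℤ, ∫ x in (0 : ℝ)..1, jacobiTheta₂_term n x t :=
        (intervalIntegral.tsum_intervalIntegral_eq_of_summable_norm
          (((summable_jacobiTheta₂_term_iff 0 t).2 ht).norm.of_nonneg_of_le
            (fun n => norm_nonneg _) hnorm)).symm
    _ = 1 := by simp [hterm]

-- Moving the contour by `t` relates the `n`-th and `(n + 1)`-st Fourier coefficients.
theorem eq_zero_of_theta_quasiperiodic {F : ℂ → ℂ} (hF : Differentiable ℂ F)
    (hper : Function.Periodic F 1) (hquasi : ∀ x, F (x + t) = cexp (-π * I * (t + 2 * x)) * F x)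
    (hint : ∫ x in (0 : ℝ)..1, F x = 0) : F = 0 := by
  have hper_exp (n : ℤ) : Function.Periodic (fun x => cexp (-2 * π * I * n * x) * F x) 1 :=
    fun x => by
      simp only [hper x]
      rw [show -2 * π * I * n * (x + 1) = -2 * π * I * n * x + (-n : ℤ) * (2 * π * I) by
        push_cast; ring, Complex.exp_add, Complex.exp_int_mul_two_pi_mul_I, mul_one]
  have hrec (n : ℤ) : ∫ x in (0 : ℝ)..1, cexp (-2 * π * I * n * x) * F x =
      cexp (-π * I * (2 * n + 1) * t) *
        ∫ x in (0 : ℝ)..1, cexp (-2 * π * I * (n + 1 : ℤ) * x) * F x := by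
    rw [← intervalIntegral_add_of_entire_periodic (by fun_prop) (hper_exp n) t,
      ← intervalIntegral.integral_const_mul]
    refine intervalIntegral.integral_congr fun x _ => ?_
    simp only [hquasi, ← mul_assoc, ← Complex.exp_add]
    push_cast
    ring_nf
  refine eq_zero_of_fourier_integrals_eq_zero hF hper fun n => ?_
  induction n with
  | zero => simpa using hint
  | succ n ih => exact (mul_eq_zero.1 ((hrec n).symm.trans ih)).resolve_left (Complex.exp_ne_zero _)
  | pred n ih => rw [hrec, sub_add_cancel, ih, mul_zero]

theorem eq_integral_mul_jacobiTheta₂_of_quasiperiodic (ht : 0 < t.im) {F : ℂ → ℂ}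
    (hF : Differentiable ℂ F) (hper : Function.Periodic F 1)
    (hquasi : ∀ x, F (x + t) = cexp (-π * I * (t + 2 * x)) * F x) (x : ℂ) :
    F x = (∫ y in (0 : ℝ)..1, F y) * jacobiTheta₂ x t := by
  have htheta : Differentiable ℂ fun x => jacobiTheta₂ x t :=
    fun x => differentiableAt_jacobiTheta₂_fst x ht
  have hFc : Continuous fun y : ℝ => F y := hF.continuous.comp continuous_ofReal
  have hthetac : Continuous fun y : ℝ => jacobiTheta₂ y t :=
    htheta.continuous.comp continuous_ofReal
  refine sub_eq_zero.1 (congrFun (eq_zero_of_theta_quasiperiodic (t := t)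
    (F := fun x => F x - (∫ y in (0 : ℝ)..1, F y) * jacobiTheta₂ x t)
    (hF.sub (htheta.const_mul _)) (fun x => ?_) (fun x => ?_) ?_) x)
  · simp only [hper x, jacobiTheta₂_add_left]
  · simp only [hquasi, jacobiTheta₂_add_left']
    ring
  · rw [intervalIntegral.integral_sub (hFc.intervalIntegrable 0 1)
      ((hthetac.intervalIntegrable 0 1).const_mul _),
      intervalIntegral.integral_const_mul, intervalIntegral_jacobiTheta₂ ht, mul_one, sub_self]

end ThetaUniqueness

section OddTheta

/-- The odd Jacobi theta function `ϑ[1/2,1/2](·, t)`, with the modular parameter as the first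
argument so that it is a function of the elliptic variable. -/
noncomputable def oddTheta (t x : ℂ) : ℂ := thetaChar (1 / 2) (1 / 2) x t

variable {t : ℂ}

theorem differentiable_oddTheta (ht : 0 < t.im) : Differentiable ℂ (oddTheta t) :=
  differentiable_thetaChar _ _ ht

theorem oddTheta_neg (t x : ℂ) : oddTheta t (-x) = -oddTheta t x := by
  have h := thetaChar_neg (1 / 2) (1 / 2) x t
  have hleft := thetaChar_add_intCast_left (-(1 / 2)) (-(1 / 2)) (-x) t 1
  have hright := thetaChar_add_one_right (1 / 2) (-(1 / 2)) (-x) t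
  rw [show 2 * π * I * (1 / 2 : ℝ) = π * I by push_cast; ring, Complex.exp_pi_mul_I] at hright
  norm_num at h hleft hright
  rw [oddTheta, oddTheta, hright, hleft, h]

theorem oddTheta_zero (t : ℂ) : oddTheta t 0 = 0 :=
  self_eq_neg.1 (by simpa using oddTheta_neg t 0)

theorem oddTheta_eq_exp_mul_jacobiTheta₂ (t x : ℂ) : oddTheta t x =
    cexp (π * I * (t / 4 + x + 1 / 2)) * jacobiTheta₂ (x + 1 / 2 + t / 2) t := by
  rw [oddTheta, thetaChar_eq_exp_mul_jacobiTheta₂]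
  push_cast
  ring_nf

theorem exists_oddTheta_ne_zero (ht : 0 < t.im) : ∃ x, oddTheta t x ≠ 0 := by
  by_contra! h
  have hzero (x : ℂ) : jacobiTheta₂ x t = 0 := by
    have hx := h (x - 1 / 2 - t / 2)
    rw [oddTheta_eq_exp_mul_jacobiTheta₂] at hx
    convert (mul_eq_zero.1 hx).resolve_left (Complex.exp_ne_zero _) using 1
    ring_nf
  simpa [hzero] using intervalIntegral_jacobiTheta₂ ht

theorem exists_eq_const_mul_oddTheta (ht : 0 < t.im) {F : ℂ → ℂ} (hF : Differentiable ℂ F)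
    (h1 : ∀ x, F (x + 1) = -F x)
    (h2 : ∀ x, F (x + t) = -cexp (-π * I * t - 2 * π * I * x) * F x) :
    ∃ c : ℂ, ∀ x, F x = c * oddTheta t x := by
  let G (y : ℂ) : ℂ := cexp (-π * I * y) * F (y - 1 / 2 - t / 2)
  have hper : Function.Periodic G 1 := fun y => by
    have harg : y + 1 - 1 / 2 - t / 2 = y - 1 / 2 - t / 2 + 1 := by ring
    have hexp : cexp (-π * I * (y + 1)) = -cexp (-π * I * y) := by
      rw [← Complex.exp_sub_pi_mul_I]
      ring_nf
    simp only [G, harg, h1, hexp, neg_mul_neg]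
  have hquasi (y : ℂ) : G (y + t) = cexp (-π * I * (t + 2 * y)) * G y := by
    have harg : y + t - 1 / 2 - t / 2 = y - 1 / 2 - t / 2 + t := by ring
    simp only [G, harg, h2, ← mul_assoc, ← Complex.exp_add, ← Complex.exp_sub_pi_mul_I]
    ring_nf
  have hG := eq_integral_mul_jacobiTheta₂_of_quasiperiodic ht (F := G) (by fun_prop) hper hquasi
  refine ⟨(∫ y in (0 : ℝ)..1, G y) * cexp (π * I * t / 4), fun x => ?_⟩
  have hx : cexp (-π * I * (x + 1 / 2 + t / 2)) * F x =
      (∫ y in (0 : ℝ)..1, G y) * jacobiTheta₂ (x + 1 / 2 + t / 2) t := by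
    rw [← hG]
    simp only [G]
    ring_nf
  refine mul_left_cancel₀ (Complex.exp_ne_zero (-π * I * (x + 1 / 2 + t / 2))) ?_
  have hexp : cexp (-π * I * (x + 1 / 2 + t / 2)) *
      (cexp (π * I * t / 4) * cexp (π * I * (t / 4 + x + 1 / 2))) = 1 := by
    rw [← Complex.exp_add, ← Complex.exp_add, ← Complex.exp_zero]
    ring_nf
  rw [hx, oddTheta_eq_exp_mul_jacobiTheta₂]
  linear_combination -(∫ y in (0 : ℝ)..1, G y) * jacobiTheta₂ (x + 1 / 2 + t / 2) t * hexp

end OddTheta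

section AdditionFormulas

variable {t : ℂ}

theorem exists_oddTheta_add_mul_oddTheta_sub_eq (ht : 0 < t.im) :
    ∃ a b : ℂ → ℂ, Differentiable ℂ a ∧ Differentiable ℂ b ∧
      ∀ x y, oddTheta t (x + y) * oddTheta t (x - y) = a x * b y - b x * a y := by
  have ht2 : 0 < (2 * t).im := by simpa using ht
  refine ⟨fun x => thetaChar 0 0 (2 * x) (2 * t), fun x => thetaChar (1 / 2) 0 (2 * x) (2 * t),
    (differentiable_thetaChar 0 0 ht2).comp (differentiable_id.const_mul 2),
    (differentiable_thetaChar (1 / 2) 0 ht2).comp (differentiable_id.const_mul 2), fun x y => ?_⟩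
  have hodd : thetaChar (1 / 2) 1 (2 * x) (2 * t) = -thetaChar (1 / 2) 0 (2 * x) (2 * t) := by
    have h := thetaChar_add_one_right (1 / 2) 0 (2 * x) (2 * t)
    rwa [show 2 * π * I * (1 / 2 : ℝ) = π * I by push_cast; ring, Complex.exp_pi_mul_I,
      neg_one_mul, zero_add] at h
  have heven : thetaChar 1 1 (2 * x) (2 * t) = thetaChar 0 0 (2 * x) (2 * t) := by
    have h := thetaChar_add_one_right 0 0 (2 * x) (2 * t)
    have h' := thetaChar_add_intCast_left 0 1 (2 * x) (2 * t) 1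
    simp only [Int.cast_one, zero_add, ofReal_zero, mul_zero, Complex.exp_zero, one_mul] at h h'
    rw [h', h]
  rw [oddTheta, oddTheta, thetaChar_mul_thetaChar _ _ _ _ _ _ ht]
  norm_num at hodd ⊢
  rw [← two_mul, ← two_mul, heven, hodd]
  ring

theorem deriv_oddTheta_zero_ne_zero (ht : 0 < t.im) : deriv (oddTheta t) 0 ≠ 0 := by
  intro h0
  obtain ⟨a, b, ha, hb, hab⟩ := exists_oddTheta_add_mul_oddTheta_sub_eq ht
  have hθ := differentiable_oddTheta ht
  have hW (x : ℂ) : deriv a x * b x = a x * deriv b x := by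
    have hl := ((hθ (x + x)).hasDerivAt.comp_add_const x x).mul
      ((hθ (x - x)).hasDerivAt.comp_sub_const x x)
    have hr := ((ha x).hasDerivAt.mul_const (b x)).fun_sub ((hb x).hasDerivAt.mul_const (a x))
    have := hl.unique (hr.congr_of_eventuallyEq (.of_forall fun u => hab u x))
    rw [sub_self, h0, oddTheta_zero] at this
    linear_combination -this
  obtain ⟨x, hx⟩ := exists_oddTheta_ne_zero ht
  have hsq := hab x 0
  rw [add_zero, sub_zero] at hsq
  by_cases hb0 : ∀ y, b y = 0
  · exact mul_ne_zero hx hx (by rw [hsq, hb0, hb0, mul_zero, zero_mul, sub_zero])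
  · obtain ⟨y, hy⟩ := not_forall.1 hb0
    obtain ⟨c, hc⟩ := exists_eq_const_mul_of_wronskian_eq_zero ha hb hW hy
    exact mul_ne_zero hx hx (by rw [hsq, hc, hc]; ring)

/-- The product `ϑ(x + y) ϑ(x - y)` for the odd theta function `ϑ`, the building block of
Weierstrass' three-term addition formula. -/
noncomputable def oddThetaPair (t x y : ℂ) : ℂ := oddTheta t (x + y) * oddTheta t (x - y)

-- The Plücker relation for the `2 × 2` minors `a x * b y - b x * a y`.
theorem oddThetaPair_mul_oddThetaPair (ht : 0 < t.im) (p q r s : ℂ) :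
    oddThetaPair t p q * oddThetaPair t r s =
      oddThetaPair t p r * oddThetaPair t q s - oddThetaPair t p s * oddThetaPair t q r := by
  obtain ⟨a, b, -, -, hab⟩ := exists_oddTheta_add_mul_oddTheta_sub_eq ht
  simp only [oddThetaPair, hab]
  ring

theorem hasDerivAt_oddThetaPair_left (ht : 0 < t.im) {x y : ℂ} (h : oddThetaPair t x y ≠ 0) :
    HasDerivAt (fun u => oddThetaPair t u y) (oddThetaPair t x y *
      (logDeriv (oddTheta t) (x + y) + logDeriv (oddTheta t) (x - y))) x := by
  have hθ := differentiable_oddTheta ht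
  have hadd : oddTheta t (x + y) ≠ 0 := left_ne_zero_of_mul h
  have hsub : oddTheta t (x - y) ≠ 0 := right_ne_zero_of_mul h
  refine (((hθ (x + y)).hasDerivAt.comp_add_const x y).mul
    ((hθ (x - y)).hasDerivAt.comp_sub_const x y)).congr_deriv ?_
  rw [oddThetaPair, logDeriv_apply, logDeriv_apply]
  field_simp

theorem hasDerivAt_oddThetaPair_diag (ht : 0 < t.im) (x : ℂ) :
    HasDerivAt (fun u => oddThetaPair t u x) (deriv (oddTheta t) 0 * oddTheta t (2 * x)) x := by
  have hθ := differentiable_oddTheta ht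
  refine (((hθ (x + x)).hasDerivAt.comp_add_const x x).mul
    ((hθ (x - x)).hasDerivAt.comp_sub_const x x)).congr_deriv ?_
  rw [sub_self, oddTheta_zero, ← two_mul]
  ring

-- Differentiate the three-term relation in `p` at `p = q`.
theorem deriv_oddTheta_zero_mul_oddThetaPair (ht : 0 < t.im) {q r s : ℂ}
    (hr : oddThetaPair t q r ≠ 0) (hs : oddThetaPair t q s ≠ 0) :
    deriv (oddTheta t) 0 * oddTheta t (2 * q) * oddThetaPair t r s =
      oddThetaPair t q r * oddThetaPair t q s *
        (logDeriv (oddTheta t) (q + r) + logDeriv (oddTheta t) (q - r) -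
          (logDeriv (oddTheta t) (q + s) + logDeriv (oddTheta t) (q - s))) := by
  have hleft := (hasDerivAt_oddThetaPair_diag ht q).mul_const (oddThetaPair t r s)
  have hright := ((hasDerivAt_oddThetaPair_left ht hr).mul_const (oddThetaPair t q s)).fun_sub
    ((hasDerivAt_oddThetaPair_left ht hs).mul_const (oddThetaPair t q r))
  have := hleft.unique (hright.congr_of_eventuallyEq
    (.of_forall fun p => oddThetaPair_mul_oddThetaPair ht p q r s))
  linear_combination this

-- Differentiate the previous relation in `r` at `r = s`.
theorem deriv_oddTheta_zero_sq_mul (ht : 0 < t.im) {q s : ℂ} (hs : oddThetaPair t q s ≠ 0) :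
    deriv (oddTheta t) 0 ^ 2 * oddTheta t (2 * q) * oddTheta t (2 * s) =
      oddThetaPair t q s ^ 2 *
        (deriv (logDeriv (oddTheta t)) (q + s) - deriv (logDeriv (oddTheta t)) (q - s)) := by
  have hθ := differentiable_oddTheta ht
  have hlog (x : ℂ) (hx : oddTheta t x ≠ 0) :=
    (differentiableAt_logDeriv_of_entire hθ hx).hasDerivAt
  have hpair : Differentiable ℂ fun r => oddThetaPair t q r := by
    unfold oddThetaPair
    fun_prop
  have hleft := (hasDerivAt_oddThetaPair_diag ht s).const_mul
    (deriv (oddTheta t) 0 * oddTheta t (2 * q))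
  have hright := (((hpair s).hasDerivAt.mul_const (oddThetaPair t q s)).mul
    ((((hlog _ (left_ne_zero_of_mul hs)).comp_const_add q s).fun_add
      ((hlog _ (right_ne_zero_of_mul hs)).comp_const_sub q s)).sub_const
        (logDeriv (oddTheta t) (q + s) + logDeriv (oddTheta t) (q - s))))
  have := hleft.unique (hright.congr_of_eventuallyEq <| by
    filter_upwards [hpair.continuous.continuousAt.eventually_ne hs] with r hr
    exact deriv_oddTheta_zero_mul_oddThetaPair ht hr hs)
  linear_combination this

end AdditionFormulas

section PeriodicProducts

variable {M : Type*} {N : ℕ} {g : ℤ → M}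

theorem toNat_emod_lt (hN : N ≠ 0) (k : ℤ) : (k % N).toNat < N := by
  have := Int.emod_lt_of_pos k (show (0 : ℤ) < N by omega)
  omega

theorem apply_toNat_emod_of_periodic (hN : N ≠ 0) (hg : Function.Periodic g N) (k : ℤ) :
    g (k % N).toNat = g k := by
  rw [Int.toNat_of_nonneg (Int.emod_nonneg k (Int.natCast_ne_zero.2 hN)), Int.emod_def, mul_comm,
    ← smul_eq_mul, hg.sub_zsmul_eq]

variable [CommMonoid M]

@[to_additive]
theorem prod_range_add_of_periodic (hg : Function.Periodic g N) (m : ℤ) :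
    ∏ k ∈ Finset.range N, g (k + m) = ∏ k ∈ Finset.range N, g k := by
  have hstep (m : ℤ) :
      ∏ k ∈ Finset.range N, g (k + (m + 1)) = ∏ k ∈ Finset.range N, g (k + m) := by
    cases N with
    | zero => rfl
    | succ n =>
      rw [Finset.prod_range_succ, Finset.prod_range_succ']
      congr 1
      · exact Finset.prod_congr rfl fun k _ => by push_cast; ring_nf
      · rw [← hg ((0 : ℕ) + m)]
        push_cast
        ring_nf
  induction m with
  | zero => simp
  | succ m ih => rw [hstep, ih]
  | pred m ih => rw [← ih, ← hstep, sub_add_cancel]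

theorem prod_filter_emod_ne_mul_of_periodic (hN : N ≠ 0) (hg : Function.Periodic g N) (b : ℤ) :
    (∏ k ∈ (Finset.range N).filter (fun k : ℕ => (k : ℤ) % N ≠ b % N), g k) * g b =
      ∏ k ∈ Finset.range N, g k := by
  have hfilter : (Finset.range N).filter (fun k : ℕ => (k : ℤ) % N ≠ b % N) =
      (Finset.range N).erase (b % N).toNat := by
    have hb := Int.emod_nonneg b (Int.natCast_ne_zero.2 hN)
    ext k
    rw [Finset.mem_filter, Finset.mem_erase, and_comm, and_congr_left_iff, Finset.mem_range]
    intro hk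
    rw [Int.emod_eq_of_lt (by omega) (by omega)]
    omega
  rw [hfilter, ← apply_toNat_emod_of_periodic hN hg b]
  exact Finset.prod_erase_mul _ _ (Finset.mem_range.2 (toNat_emod_lt hN b))

end PeriodicProducts

section LevelTheta

/-- The level-`N` theta functions `ϑ[k/N+1/2,1/2](·, Nτ)` entering the matrix entries, indexed by
`k : ℤ` (they depend on `k` modulo `N` only). -/
noncomputable def levelTheta (N : ℕ) (τ : ℂ) (k : ℤ) (x : ℂ) : ℂ :=
  thetaChar (k / N + 1 / 2) (1 / 2) x (N * τ)

/-- The exponent relating `levelTheta N τ k x` to the odd theta function at `x + k * τ`. -/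
noncomputable def levelPhase (N : ℕ) (τ : ℂ) (k : ℤ) (x : ℂ) : ℂ :=
  π * I * k ^ 2 * τ / N + 2 * π * I * k / N * (x + 1 / 2)

variable {N : ℕ} {τ : ℂ}

theorem im_natCast_mul_pos (hN : N ≠ 0) (hτ : 0 < τ.im) : 0 < (N * τ : ℂ).im := by
  simpa using mul_pos (Nat.cast_pos.2 (Nat.pos_of_ne_zero hN)) hτ

theorem levelTheta_eq_exp_mul_oddTheta (hN : N ≠ 0) (τ : ℂ) (k : ℤ) (x : ℂ) :
    levelTheta N τ k x = cexp (levelPhase N τ k x) * oddTheta (N * τ) (x + k * τ) := by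
  have hN' : (N : ℂ) ≠ 0 := Nat.cast_ne_zero.2 hN
  have hshift := thetaChar_add_ofReal_mul (1 / 2) (1 / 2) (k / N) x (N * τ)
  rw [show x + ((k / N : ℝ) : ℂ) * (N * τ) = x + k * τ by push_cast; field_simp,
    add_comm (1 / 2 : ℝ)] at hshift
  have hphase : levelPhase N τ k x +
      (-(π * I * (k / N : ℝ) ^ 2 * (N * τ)) - 2 * π * I * (k / N : ℝ) * (x + (1 / 2 : ℝ))) = 0 := by
    rw [levelPhase]
    push_cast
    field_simp
    ring
  rw [oddTheta, hshift, ← mul_assoc, ← Complex.exp_add, hphase, Complex.exp_zero, one_mul,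
    levelTheta]

theorem differentiable_levelTheta (hN : N ≠ 0) (hτ : 0 < τ.im) (k : ℤ) :
    Differentiable ℂ (levelTheta N τ k) :=
  differentiable_thetaChar _ _ (im_natCast_mul_pos hN hτ)

theorem levelTheta_periodic (hN : N ≠ 0) (τ : ℂ) :
    Function.Periodic (levelTheta N τ) N := fun k => by
  ext x
  have h := thetaChar_add_intCast_left (k / N + 1 / 2) (1 / 2) x (N * τ) 1
  simp only [levelTheta]
  rw [← h]
  push_cast
  rw [add_div, div_self (Nat.cast_ne_zero.2 hN), add_right_comm]

theorem levelTheta_add_one (N : ℕ) (τ : ℂ) (k : ℤ) (x : ℂ) :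
    levelTheta N τ k (x + 1) = cexp (2 * π * I * (k / N + 1 / 2)) * levelTheta N τ k x := by
  rw [levelTheta, thetaChar_add_one, levelTheta]
  push_cast
  rfl

theorem levelTheta_add_tau (hN : N ≠ 0) (τ : ℂ) (k : ℤ) (x : ℂ) : levelTheta N τ k (x + τ) =
    cexp (-π * I * τ / N - 2 * π * I / N * (x + 1 / 2)) * levelTheta N τ (k + 1) x := by
  have hN' : (N : ℂ) ≠ 0 := Nat.cast_ne_zero.2 hN
  have hshift := thetaChar_add_ofReal_mul (k / N + 1 / 2) (1 / 2) (1 / N) x (N * τ)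
  rw [show x + ((1 / N : ℝ) : ℂ) * (N * τ) = x + τ by push_cast; field_simp] at hshift
  rw [levelTheta, hshift, levelTheta]
  congr 2
  · push_cast
    field_simp
  · push_cast
    ring

theorem levelTheta_zero_index (N : ℕ) (τ : ℂ) : levelTheta N τ 0 = oddTheta (N * τ) := by
  ext x
  simp [levelTheta, oddTheta]

/-- The product of the `N` level-`N` theta functions, proportional to the odd theta function of
parameter `τ`. -/
noncomputable def levelThetaProd (N : ℕ) (τ x : ℂ) : ℂ := ∏ k ∈ Finset.range N, levelTheta N τ k x

/-- The denominator `∏ ϑ[k/N+1/2,1/2](0, Nτ)`, `1 ≤ k < N`, of the matrix entries. -/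
noncomputable def levelThetaConst (N : ℕ) (τ : ℂ) : ℂ :=
  ∏ k ∈ Finset.Icc 1 (N - 1), levelTheta N τ k 0

theorem levelTheta_ne_zero_of_levelThetaProd_ne_zero (hN : N ≠ 0) {x : ℂ}
    (h : levelThetaProd N τ x ≠ 0) (k : ℤ) : levelTheta N τ k x ≠ 0 := by
  rw [← apply_toNat_emod_of_periodic hN (levelTheta_periodic hN τ) k]
  exact Finset.prod_ne_zero_iff.1 h _ (Finset.mem_range.2 (toNat_emod_lt hN k))

theorem levelTheta_zero_ne_zero_of_not_dvd (hN : N ≠ 0) (h : levelThetaConst N τ ≠ 0) {k : ℤ}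
    (hk : ¬ (N : ℤ) ∣ k) : levelTheta N τ k 0 ≠ 0 := by
  rw [← apply_toNat_emod_of_periodic hN (levelTheta_periodic hN τ) k]
  have hpos : (k % N).toNat ≠ 0 := by
    have := Int.emod_nonneg k (Int.natCast_ne_zero.2 hN)
    rw [Int.dvd_iff_emod_eq_zero] at hk
    omega
  have hlt := toNat_emod_lt hN k
  exact Finset.prod_ne_zero_iff.1 h _ (Finset.mem_Icc.2 (by omega))

theorem levelThetaProd_add_one (hN : N ≠ 0) (τ x : ℂ) :
    levelThetaProd N τ (x + 1) = -levelThetaProd N τ x := by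
  have hN' : (N : ℂ) ≠ 0 := Nat.cast_ne_zero.2 hN
  have hsum (n : ℕ) : ∑ k ∈ Finset.range n, 2 * π * I * ((k : ℤ) / N + 1 / 2) =
      π * I * n * (n - 1) / N + π * I * n := by
    induction n with
    | zero => simp
    | succ n ih =>
      rw [Finset.sum_range_succ, ih]
      push_cast
      ring
  have hexp : π * I * N * (N - 1) / N + π * I * N = N * (2 * π * I) - π * I := by
    field_simp
    ring
  simp only [levelThetaProd, levelTheta_add_one]
  rw [Finset.prod_mul_distrib, ← Complex.exp_sum, hsum, hexp, Complex.exp_sub_pi_mul_I,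
    Complex.exp_nat_mul_two_pi_mul_I, neg_one_mul]

theorem levelThetaProd_add_tau (hN : N ≠ 0) (τ x : ℂ) : levelThetaProd N τ (x + τ) =
    -cexp (-π * I * τ - 2 * π * I * x) * levelThetaProd N τ x := by
  have hN' : (N : ℂ) ≠ 0 := Nat.cast_ne_zero.2 hN
  have hperiodic : Function.Periodic (fun k => levelTheta N τ k x) N :=
    (levelTheta_periodic hN τ).comp fun f => f x
  simp only [levelThetaProd, levelTheta_add_tau hN]
  rw [Finset.prod_mul_distrib, prod_range_add_of_periodic hperiodic, Finset.prod_const,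
    Finset.card_range, ← Complex.exp_nat_mul, ← Complex.exp_sub_pi_mul_I]
  congr 2
  field_simp
  ring

theorem differentiable_levelThetaProd (hN : N ≠ 0) (hτ : 0 < τ.im) :
    Differentiable ℂ (levelThetaProd N τ) :=
  Differentiable.fun_finsetProd fun k _ => differentiable_levelTheta hN hτ k

theorem deriv_levelThetaProd_zero (hN : N ≠ 0) (hτ : 0 < τ.im) :
    deriv (levelThetaProd N τ) 0 = deriv (oddTheta (N * τ)) 0 * levelThetaConst N τ := by
  have hfactor (x : ℂ) : levelThetaProd N τ x =
      oddTheta (N * τ) x * ∏ k ∈ Finset.Icc 1 (N - 1), levelTheta N τ k x := by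
    rw [levelThetaProd, Finset.prod_range_eq_mul_Ico _ (Nat.pos_of_ne_zero hN), Nat.cast_zero,
      levelTheta_zero_index]
    rfl
  have hrest : DifferentiableAt ℂ
      (fun x => ∏ k ∈ Finset.Icc 1 (N - 1), levelTheta N τ k x) 0 :=
    DifferentiableAt.fun_finsetProd fun k _ => differentiable_levelTheta hN hτ k 0
  rw [funext hfactor, deriv_fun_mul (differentiable_oddTheta (im_natCast_mul_pos hN hτ) 0) hrest,
    oddTheta_zero, zero_mul, add_zero, levelThetaConst]

theorem deriv_oddTheta_zero_mul_levelThetaProd (hN : N ≠ 0) (hτ : 0 < τ.im) (x : ℂ) :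
    deriv (oddTheta τ) 0 * levelThetaProd N τ x =
      deriv (oddTheta (N * τ)) 0 * levelThetaConst N τ * oddTheta τ x := by
  obtain ⟨c, hc⟩ := exists_eq_const_mul_oddTheta hτ (differentiable_levelThetaProd hN hτ)
    (levelThetaProd_add_one hN τ) (levelThetaProd_add_tau hN τ)
  rw [← deriv_levelThetaProd_zero hN hτ, funext hc, deriv_const_mul_field]
  ring

end LevelTheta

section LevelLogDeriv

variable {N : ℕ} {τ : ℂ}

theorem logDeriv_levelTheta (hN : N ≠ 0) (hτ : 0 < τ.im) {k : ℤ} {x : ℂ}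
    (h : levelTheta N τ k x ≠ 0) : logDeriv (levelTheta N τ k) x =
      2 * π * I * k / N + logDeriv (oddTheta (N * τ)) (x + k * τ) := by
  have hθ := differentiable_oddTheta (im_natCast_mul_pos hN hτ)
  have hphase : HasDerivAt (fun u => cexp (levelPhase N τ k u))
      (cexp (levelPhase N τ k x) * (2 * π * I * k / N)) x := by
    simpa only [levelPhase, mul_one] using
      ((((hasDerivAt_id' x).add_const (1 / 2)).const_mul (2 * π * I * k / N)).const_add
        (π * I * k ^ 2 * τ / N)).cexp
  rw [levelTheta_eq_exp_mul_oddTheta hN] at h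
  rw [funext (levelTheta_eq_exp_mul_oddTheta hN τ k),
    logDeriv_mul (f := fun u => cexp (levelPhase N τ k u)) x (Complex.exp_ne_zero _)
    (right_ne_zero_of_mul h) hphase.differentiableAt (by fun_prop), logDeriv_apply,
    logDeriv_apply, logDeriv_apply, hphase.deriv, deriv_comp_add_const,
    mul_div_cancel_left₀ _ (Complex.exp_ne_zero _)]

theorem deriv_logDeriv_levelTheta (hN : N ≠ 0) (hτ : 0 < τ.im) {k : ℤ} {x : ℂ}
    (h : levelTheta N τ k x ≠ 0) : deriv (logDeriv (levelTheta N τ k)) x =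
      deriv (logDeriv (oddTheta (N * τ))) (x + k * τ) := by
  have hnear := (differentiable_levelTheta hN hτ k).continuous.continuousAt.eventually_ne h
  rw [Filter.EventuallyEq.deriv_eq (hnear.mono fun u hu => logDeriv_levelTheta hN hτ hu),
    deriv_const_add, deriv_comp_add_const]

theorem logDeriv_levelThetaProd (hN : N ≠ 0) (hτ : 0 < τ.im) {x : ℂ}
    (h : levelThetaProd N τ x ≠ 0) : logDeriv (levelThetaProd N τ) = logDeriv (oddTheta τ) := by
  have hprop := deriv_oddTheta_zero_mul_levelThetaProd hN hτ
  have hp := deriv_oddTheta_zero_ne_zero hτ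
  have hc := left_ne_zero_of_mul ((hprop x).symm.trans_ne (mul_ne_zero hp h))
  ext y
  rw [← logDeriv_const_mul y _ hp, funext hprop, logDeriv_const_mul y _ hc]

theorem sum_deriv_logDeriv_levelTheta (hN : N ≠ 0) (hτ : 0 < τ.im) {x : ℂ}
    (h : levelThetaProd N τ x ≠ 0) :
    ∑ k ∈ Finset.range N, deriv (logDeriv (levelTheta N τ k)) x =
      deriv (logDeriv (oddTheta τ)) x := by
  have hf (k : ℤ) := differentiable_levelTheta hN hτ k
  have hnear := (differentiable_levelThetaProd hN hτ).continuous.continuousAt.eventually_ne h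
  have hsum : logDeriv (levelThetaProd N τ) =ᶠ[𝓝 x]
      fun u => ∑ k ∈ Finset.range N, logDeriv (levelTheta N τ k) u := by
    filter_upwards [hnear] with u hu
    exact logDeriv_prod (fun k _ => levelTheta_ne_zero_of_levelThetaProd_ne_zero hN hu k)
      fun k _ => hf k u
  rw [← logDeriv_levelThetaProd hN hτ h, hsum.deriv_eq, deriv_fun_sum fun (k : ℕ) _ =>
    differentiableAt_logDeriv_of_entire (hf k)
      (levelTheta_ne_zero_of_levelThetaProd_ne_zero hN h k)]

theorem levelThetaProd_neg (hN : N ≠ 0) (hτ : 0 < τ.im) (x : ℂ) :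
    levelThetaProd N τ (-x) = -levelThetaProd N τ x := by
  refine mul_left_cancel₀ (deriv_oddTheta_zero_ne_zero hτ) ?_
  rw [mul_neg, deriv_oddTheta_zero_mul_levelThetaProd hN hτ,
    deriv_oddTheta_zero_mul_levelThetaProd hN hτ, oddTheta_neg, mul_neg]

theorem oddTheta_ne_zero_of_levelThetaProd_ne_zero (hN : N ≠ 0) (hτ : 0 < τ.im) {x : ℂ}
    (h : levelThetaProd N τ x ≠ 0) : oddTheta τ x ≠ 0 :=
  right_ne_zero_of_mul ((deriv_oddTheta_zero_mul_levelThetaProd hN hτ x).symm.trans_ne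
    (mul_ne_zero (deriv_oddTheta_zero_ne_zero hτ) h))

end LevelLogDeriv

section Unitarity

/-- The part depending on `k` of the summand `S^{-i-k,i-k}(x,z,τ) S^{-j-k,k-j}(-x,z,τ)` of the
unitarity identity. -/
noncomputable def levelThetaRatio (N : ℕ) (τ x z : ℂ) (i j k : ℤ) : ℂ :=
  levelTheta N τ (2 * k) (-x + z) / (levelTheta N τ (k + i) z * levelTheta N τ (i - k) x *
    levelTheta N τ (k + j) z * levelTheta N τ (k - j) (-x))

variable {N : ℕ} {τ x z : ℂ}

theorem Smat_eq_levelTheta (hN : N ≠ 0) {b : ℤ} (hb : levelTheta N τ b x ≠ 0) (z : ℂ) (a : ℤ) :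
    Smat N x z τ a b = levelTheta N τ (b - a) (x + z) / levelTheta N τ (-a) z *
      (levelThetaProd N τ x / levelTheta N τ b x) / levelThetaConst N τ := by
  have hperiodic : Function.Periodic (fun k => levelTheta N τ k x) N :=
    (levelTheta_periodic hN τ).comp fun f => f x
  rw [levelThetaProd, ← prod_filter_emod_ne_mul_of_periodic hN hperiodic b,
    mul_div_cancel_right₀ _ hb]
  simp only [Smat, levelTheta, levelThetaConst, Int.cast_sub, Int.cast_neg, Int.cast_natCast]

theorem Smat_mul_Smat_eq (hN : N ≠ 0) (hτ : 0 < τ.im) (hx : levelThetaProd N τ x ≠ 0) (z : ℂ)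
    (i j k : ℤ) : Smat N x z τ (-i - k) (i - k) * Smat N (-x) z τ (-j - k) (k - j) =
      -(levelTheta N τ (2 * i) (x + z) * (levelThetaProd N τ x / levelThetaConst N τ) ^ 2) *
        levelThetaRatio N τ x z i j k := by
  have hx' : levelThetaProd N τ (-x) ≠ 0 := by rwa [levelThetaProd_neg hN hτ, neg_ne_zero]
  rw [Smat_eq_levelTheta hN (levelTheta_ne_zero_of_levelThetaProd_ne_zero hN hx _),
    Smat_eq_levelTheta hN (levelTheta_ne_zero_of_levelThetaProd_ne_zero hN hx' _),
    levelThetaProd_neg hN hτ, levelThetaRatio, show i - k - (-i - k) = 2 * i by ring,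
    show k - j - (-j - k) = 2 * k by ring, show -(-i - k) = k + i by ring,
    show -(-j - k) = k + j by ring]
  ring

theorem continuous_Smat (hN : N ≠ 0) (hτ : 0 < τ.im) (z : ℂ) (a b : ℤ) :
    Continuous fun x => Smat N x z τ a b := by
  have hθ (g : ℝ) : Continuous fun x => thetaChar g (1 / 2) x (N * τ) :=
    (differentiable_thetaChar g _ (im_natCast_mul_pos hN hτ)).continuous
  unfold Smat
  exact ((((hθ _).comp (continuous_add_const z)).div_const _).mul
    (continuous_finsetProd _ fun k _ => hθ _)).div_const _

theorem oddThetaPair_half_add (t τ x z : ℂ) (i k : ℤ) :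
    oddThetaPair t ((-x + z) / 2 + k * τ) ((x + z) / 2 + i * τ) =
      oddTheta t (z + (k + i : ℤ) * τ) * oddTheta t (-x + (k - i : ℤ) * τ) := by
  rw [oddThetaPair]
  push_cast
  ring_nf

theorem exp_levelPhase_mul_levelThetaRatio (hN : N ≠ 0) (τ x z : ℂ) (i j k : ℤ) :
    cexp (levelPhase N τ (i + j) (x + z) + levelPhase N τ (i - j) 0) *
        levelThetaRatio N τ x z i j k =
      -oddTheta (N * τ) (2 * ((-x + z) / 2 + k * τ)) /
        (oddThetaPair (N * τ) ((-x + z) / 2 + k * τ) ((x + z) / 2 + i * τ) *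
          oddThetaPair (N * τ) ((-x + z) / 2 + k * τ) ((x + z) / 2 + j * τ)) := by
  have hphase : levelPhase N τ (i + j) (x + z) + levelPhase N τ (i - j) 0 =
      levelPhase N τ (k + i) z + levelPhase N τ (i - k) x + levelPhase N τ (k + j) z +
        levelPhase N τ (k - j) (-x) - levelPhase N τ (2 * k) (-x + z) := by
    simp only [levelPhase]
    push_cast
    ring
  have hodd : oddTheta (N * τ) (x + (i - k : ℤ) * τ) =
      -oddTheta (N * τ) (-x + (k - i : ℤ) * τ) := by
    rw [← oddTheta_neg]
    push_cast
    ring_nf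
  have hdouble : 2 * ((-x + z) / 2 + k * τ) = -x + z + (2 * k : ℤ) * τ := by
    push_cast
    ring
  rw [levelThetaRatio, hphase, oddThetaPair_half_add, oddThetaPair_half_add, hdouble]
  simp only [levelTheta_eq_exp_mul_oddTheta hN, hodd, Complex.exp_add, Complex.exp_sub]
  field_simp

theorem oddThetaPair_half_add_ne_zero (hN : N ≠ 0) (hx : levelThetaProd N τ (-x) ≠ 0)
    (hz : levelThetaProd N τ z ≠ 0) (i k : ℤ) :
    oddThetaPair (N * τ) ((-x + z) / 2 + k * τ) ((x + z) / 2 + i * τ) ≠ 0 := by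
  have hne {y : ℂ} (hy : levelThetaProd N τ y ≠ 0) (m : ℤ) : oddTheta (N * τ) (y + m * τ) ≠ 0 := by
    have h := levelTheta_ne_zero_of_levelThetaProd_ne_zero hN hy m
    rw [levelTheta_eq_exp_mul_oddTheta hN] at h
    exact right_ne_zero_of_mul h
  rw [oddThetaPair_half_add]
  exact mul_ne_zero (hne hz _) (hne hx _)

theorem deriv_oddTheta_zero_mul_levelThetaRatio (hN : N ≠ 0) (hτ : 0 < τ.im)
    (hx : levelThetaProd N τ (-x) ≠ 0) (hz : levelThetaProd N τ z ≠ 0) (i j k : ℤ) :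
    deriv (oddTheta (N * τ)) 0 * levelTheta N τ (i + j) (x + z) * levelTheta N τ (i - j) 0 *
        levelThetaRatio N τ x z i j k =
      logDeriv (levelTheta N τ (k + j)) z + logDeriv (levelTheta N τ (k + -j)) (-x) -
        (logDeriv (levelTheta N τ (k + i)) z + logDeriv (levelTheta N τ (k + -i)) (-x)) := by
  set q := (-x + z) / 2 + k * τ
  have hq (m : ℤ) := oddThetaPair_half_add_ne_zero hN hx hz m k
  have hlog (m : ℤ) : logDeriv (oddTheta (N * τ)) (q + ((x + z) / 2 + m * τ)) +
      logDeriv (oddTheta (N * τ)) (q - ((x + z) / 2 + m * τ)) =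
        logDeriv (levelTheta N τ (k + m)) z + logDeriv (levelTheta N τ (k + -m)) (-x) -
          4 * π * I * k / N := by
    rw [logDeriv_levelTheta hN hτ (levelTheta_ne_zero_of_levelThetaProd_ne_zero hN hz _),
      logDeriv_levelTheta hN hτ (levelTheta_ne_zero_of_levelThetaProd_ne_zero hN hx _)]
    simp only [q]
    push_cast
    ring_nf
  calc
    _ = deriv (oddTheta (N * τ)) 0 * oddThetaPair (N * τ) ((x + z) / 2 + i * τ)
          ((x + z) / 2 + j * τ) * (cexp (levelPhase N τ (i + j) (x + z) +
            levelPhase N τ (i - j) 0) * levelThetaRatio N τ x z i j k) := by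
      rw [levelTheta_eq_exp_mul_oddTheta hN, levelTheta_eq_exp_mul_oddTheta hN, Complex.exp_add,
        oddThetaPair]
      push_cast
      ring_nf
    _ = -(deriv (oddTheta (N * τ)) 0 * oddTheta (N * τ) (2 * q) * oddThetaPair (N * τ)
          ((x + z) / 2 + i * τ) ((x + z) / 2 + j * τ)) /
            (oddThetaPair (N * τ) q ((x + z) / 2 + i * τ) *
              oddThetaPair (N * τ) q ((x + z) / 2 + j * τ)) := by
      rw [exp_levelPhase_mul_levelThetaRatio hN]
      ring
    _ = _ := by
      rw [deriv_oddTheta_zero_mul_oddThetaPair (im_natCast_mul_pos hN hτ) (hq i) (hq j), neg_div,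
        mul_div_cancel_left₀ _ (mul_ne_zero (hq i) (hq j)), hlog, hlog]
      ring

theorem sum_levelThetaRatio_eq_zero (hN : N ≠ 0) (hτ : 0 < τ.im) {i j : ℤ}
    (hx : levelThetaProd N τ (-x) ≠ 0) (hz : levelThetaProd N τ z ≠ 0)
    (hxz : levelTheta N τ (i + j) (x + z) ≠ 0) (hij : levelTheta N τ (i - j) 0 ≠ 0) :
    ∑ k ∈ Finset.range N, levelThetaRatio N τ x z i j k = 0 := by
  have hs := deriv_oddTheta_zero_ne_zero (im_natCast_mul_pos hN hτ)
  have hperiodic (y : ℂ) : Function.Periodic (fun k => logDeriv (levelTheta N τ k) y) N :=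
    (levelTheta_periodic hN τ).comp fun f => logDeriv f y
  refine (mul_eq_zero_iff_left (mul_ne_zero (mul_ne_zero hs hxz) hij)).1 ?_
  simp only [Finset.mul_sum, deriv_oddTheta_zero_mul_levelThetaRatio hN hτ hx hz,
    Finset.sum_sub_distrib, Finset.sum_add_distrib, sum_range_add_of_periodic (hperiodic _),
    sub_self]

theorem deriv_oddTheta_zero_sq_mul_levelThetaRatio (hN : N ≠ 0) (hτ : 0 < τ.im)
    (hx : levelThetaProd N τ (-x) ≠ 0) (hz : levelThetaProd N τ z ≠ 0) (i k : ℤ) :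
    deriv (oddTheta (N * τ)) 0 ^ 2 * levelTheta N τ (2 * i) (x + z) *
        levelThetaRatio N τ x z i i k =
      deriv (logDeriv (levelTheta N τ (k + -i))) (-x) -
        deriv (logDeriv (levelTheta N τ (k + i))) z := by
  set q := (-x + z) / 2 + k * τ
  set s := (x + z) / 2 + i * τ with hs
  have hpair : oddThetaPair (N * τ) q s ≠ 0 := oddThetaPair_half_add_ne_zero hN hx hz i k
  have hadd : q + s = z + (k + i : ℤ) * τ := by
    push_cast
    ring
  have hsub : q - s = -x + (k + -i : ℤ) * τ := by
    push_cast
    ring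
  calc
    _ = deriv (oddTheta (N * τ)) 0 ^ 2 * oddTheta (N * τ) (2 * s) *
          (cexp (levelPhase N τ (i + i) (x + z) + levelPhase N τ (i - i) 0) *
            levelThetaRatio N τ x z i i k) := by
      rw [← two_mul, levelTheta_eq_exp_mul_oddTheta hN, sub_self, levelPhase, levelPhase, hs]
      push_cast
      ring_nf
    _ = -(deriv (oddTheta (N * τ)) 0 ^ 2 * oddTheta (N * τ) (2 * q) * oddTheta (N * τ) (2 * s)) /
          oddThetaPair (N * τ) q s ^ 2 := by
      rw [exp_levelPhase_mul_levelThetaRatio hN]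
      ring
    _ = _ := by
      rw [deriv_oddTheta_zero_sq_mul (im_natCast_mul_pos hN hτ) hpair, neg_div,
        mul_div_cancel_left₀ _ (pow_ne_zero 2 hpair), neg_sub, hadd, hsub,
        deriv_logDeriv_levelTheta hN hτ (levelTheta_ne_zero_of_levelThetaProd_ne_zero hN hz _),
        deriv_logDeriv_levelTheta hN hτ (levelTheta_ne_zero_of_levelThetaProd_ne_zero hN hx _)]

theorem deriv_oddTheta_zero_sq_mul_sum_levelThetaRatio (hN : N ≠ 0) (hτ : 0 < τ.im)
    (hx : levelThetaProd N τ (-x) ≠ 0) (hz : levelThetaProd N τ z ≠ 0) (i : ℤ) :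
    deriv (oddTheta (N * τ)) 0 ^ 2 * levelTheta N τ (2 * i) (x + z) *
        (∑ k ∈ Finset.range N, levelThetaRatio N τ x z i i k) *
          (oddTheta τ z * oddTheta τ (-x)) ^ 2 =
      -(deriv (oddTheta τ) 0 ^ 2 * oddTheta τ (x + z) * oddTheta τ (-x + z)) := by
  have hperiodic (y : ℂ) : Function.Periodic (fun k => deriv (logDeriv (levelTheta N τ k)) y) N :=
    (levelTheta_periodic hN τ).comp fun f => deriv (logDeriv f) y
  have hadd : (-x + z) / 2 + (x + z) / 2 = z := by ring
  have hsub : (-x + z) / 2 - (x + z) / 2 = -x := by ring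
  have hpair : oddThetaPair τ ((-x + z) / 2) ((x + z) / 2) = oddTheta τ z * oddTheta τ (-x) := by
    rw [oddThetaPair, hadd, hsub]
  have hne : oddThetaPair τ ((-x + z) / 2) ((x + z) / 2) ≠ 0 := by
    rw [hpair]
    exact mul_ne_zero (oddTheta_ne_zero_of_levelThetaProd_ne_zero hN hτ hz)
      (oddTheta_ne_zero_of_levelThetaProd_ne_zero hN hτ hx)
  have hdouble := deriv_oddTheta_zero_sq_mul hτ hne
  rw [hpair, hadd, hsub, mul_div_cancel₀ _ two_ne_zero, mul_div_cancel₀ _ two_ne_zero] at hdouble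
  simp only [Finset.mul_sum, deriv_oddTheta_zero_sq_mul_levelThetaRatio hN hτ hx hz,
    Finset.sum_sub_distrib, sum_range_add_of_periodic (hperiodic _),
    sum_deriv_logDeriv_levelTheta hN hτ hx, sum_deriv_logDeriv_levelTheta hN hτ hz]
  linear_combination hdouble

theorem sum_Smat_mul_Smat_eq_zero (hN : N ≠ 0) (hτ : 0 < τ.im) {i j : ℤ}
    (hx : levelThetaProd N τ x ≠ 0) (hz : levelThetaProd N τ z ≠ 0)
    (hxz : levelTheta N τ (i + j) (x + z) ≠ 0) (hij : levelTheta N τ (i - j) 0 ≠ 0) :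
    ∑ k ∈ Finset.range N, Smat N x z τ (-i - k) (i - k) * Smat N (-x) z τ (-j - k) (k - j) = 0 := by
  have hx' : levelThetaProd N τ (-x) ≠ 0 := by rwa [levelThetaProd_neg hN hτ, neg_ne_zero]
  simp only [Smat_mul_Smat_eq hN hτ hx, ← Finset.mul_sum,
    sum_levelThetaRatio_eq_zero hN hτ hx' hz hxz hij, mul_zero]

theorem sum_Smat_mul_Smat_self (hN : N ≠ 0) (hτ : 0 < τ.im) (hC : levelThetaConst N τ ≠ 0)
    (hx : levelThetaProd N τ x ≠ 0) (hz : levelThetaProd N τ z ≠ 0) (i : ℤ) :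
    ∑ k ∈ Finset.range N, Smat N x z τ (-i - k) (i - k) * Smat N (-x) z τ (-i - k) (k - i) =
      oddTheta τ (x + z) * oddTheta τ (-x + z) / oddTheta τ z ^ 2 := by
  have hx' : levelThetaProd N τ (-x) ≠ 0 := by rwa [levelThetaProd_neg hN hτ, neg_ne_zero]
  have hp := deriv_oddTheta_zero_ne_zero hτ
  have hθz := oddTheta_ne_zero_of_levelThetaProd_ne_zero hN hτ hz
  have hsum := deriv_oddTheta_zero_sq_mul_sum_levelThetaRatio hN hτ hx' hz i
  have hquot : levelThetaProd N τ x / levelThetaConst N τ =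
      deriv (oddTheta (N * τ)) 0 * oddTheta τ x / deriv (oddTheta τ) 0 := by
    rw [div_eq_div_iff hC hp]
    linear_combination deriv_oddTheta_zero_mul_levelThetaProd hN hτ x
  simp only [Smat_mul_Smat_eq hN hτ hx, ← Finset.mul_sum]
  rw [oddTheta_neg] at hsum
  rw [hquot, eq_div_iff (pow_ne_zero 2 hθz)]
  field_simp
  linear_combination -hsum

theorem sum_Smat_mul_Smat (hN : N ≠ 0) (hτ : 0 < τ.im) (hC : levelThetaConst N τ ≠ 0)
    (hx : levelThetaProd N τ x ≠ 0) (hz : levelThetaProd N τ z ≠ 0) {i j : ℤ} (hij : |i - j| < N)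
    (hxz : levelTheta N τ (i + j) (x + z) ≠ 0) :
    ∑ k ∈ Finset.range N, Smat N x z τ (-i - k) (i - k) * Smat N (-x) z τ (-j - k) (k - j) =
      oddTheta τ (x + z) * oddTheta τ (-x + z) / oddTheta τ z ^ 2 * if i = j then 1 else 0 := by
  split_ifs with heq
  · rw [← heq, sum_Smat_mul_Smat_self hN hτ hC hx hz, mul_one]
  · rw [mul_zero]
    exact sum_Smat_mul_Smat_eq_zero hN hτ hx hz hxz <| levelTheta_zero_ne_zero_of_not_dvd hN hC
      fun hdvd => heq (sub_eq_zero.1 (Int.eq_zero_of_abs_lt_dvd hdvd hij))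

end Unitarity

/-- The unitarity identity for the elliptic R-matrix entries:
`∑_{k∈ℤ_N} S^{−i−k,i−k}(ξ,ζ,τ) S^{−j−k,k−j}(−ξ,ζ,τ)
  = (ϑ[1/2,1/2](ξ+ζ,τ) ϑ[1/2,1/2](−ξ+ζ,τ)/ϑ[1/2,1/2](ζ,τ)²) δ_{ij}`. -/
theorem stmt7 (N : ℕ) (hN : 1 ≤ N) (tau : ℂ) (htau : 0 < tau.im) (xi zeta : ℂ)
    (hden1 : ∀ a : ℤ, thetaChar (-((a : ℤ) : ℝ) / N + 1 / 2) (1 / 2) zeta ((N : ℂ) * tau) ≠ 0)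
    (hden2 : ∏ k ∈ Finset.Icc 1 (N - 1),
      thetaChar ((k : ℝ) / N + 1 / 2) (1 / 2) 0 ((N : ℂ) * tau) ≠ 0)
    (hden3 : thetaChar (1 / 2) (1 / 2) zeta tau ≠ 0)
    (i j : ℕ) (hi : i < N) (hj : j < N) :
    ∑ k ∈ Finset.range N,
        Smat N xi zeta tau (-(i : ℤ) - (k : ℤ)) ((i : ℤ) - (k : ℤ))
          * Smat N (-xi) zeta tau (-(j : ℤ) - (k : ℤ)) ((k : ℤ) - (j : ℤ))
      = thetaChar (1 / 2) (1 / 2) (xi + zeta) tau * thetaChar (1 / 2) (1 / 2) (-xi + zeta) tau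
          / thetaChar (1 / 2) (1 / 2) zeta tau ^ 2
        * (if i = j then 1 else 0) := by
  have hN' : N ≠ 0 := Nat.one_le_iff_ne_zero.1 hN
  have hzeta (k : ℤ) : levelTheta N tau k zeta ≠ 0 := by simpa [levelTheta] using hden1 (-k)
  have hprod : levelThetaProd N tau zeta ≠ 0 := Finset.prod_ne_zero_iff.2 fun k _ => hzeta k
  have hlevel := differentiable_levelTheta hN' htau (i + j)
  have hθ := (differentiable_oddTheta htau).continuous
  have hS (a b : ℤ) := continuous_Smat hN' htau zeta a b
  suffices hgeneric : (fun x => ∑ k ∈ Finset.range N,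
      Smat N x zeta tau (-i - k) (i - k) * Smat N (-x) zeta tau (-j - k) (k - j)) =ᶠ[𝓝[≠] xi]
        fun x => oddTheta tau (x + zeta) * oddTheta tau (-x + zeta) / oddTheta tau zeta ^ 2 *
          if i = j then 1 else 0 from
    ((ContinuousAt.eventuallyEq_nhds_iff_eventuallyEq_nhdsNE (by fun_prop)
      (by fun_prop (disch := exact pow_ne_zero 2 hden3))).1 hgeneric).self_of_nhds
  filter_upwards [eventually_nhdsNE_ne_zero_of_entire (differentiable_levelThetaProd hN' htau)
      hprod xi,
    eventually_nhdsNE_ne_zero_of_entire (f := fun x => levelTheta N tau (i + j) (x + zeta))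
      (by fun_prop) (y := 0) (by simpa only [zero_add] using hzeta (i + j)) xi] with x hx hxz
  simpa only [Nat.cast_inj] using
    sum_Smat_mul_Smat hN' htau hden2 hx hprod (i := i) (j := j) (by rw [abs_lt]; omega) hxz
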